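/- arXiv:1308.4635 — 3 statements merged into one kernel-verified Lean document; each statement's English description precedes it below -/
import Mathlib

section
/- Let δ ≥ 0 and let P₁, …, P_k be 4-partite no-signaling boxes, each with Bell value B·P_j ≤ δ. Fix inputs u*₁, …, u*_k with each u*_j ∈ U₀ ∪ U₁, let m_j be the majority maj(x¹,x²,x³) of the first three output bits of box j when its input is u*_j, and suppose the outputs of the k boxes are mutually independent, with x_j distributed according to P_j(·|u*_j). Then q := P(m₁ ⊕ m₂ ⊕ … ⊕ m_k = 0) satisfies |q − 1/2| ≤ (1/2)·((11+7δ)/16)^k. -/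
/-!
The heart of the matter is the bound `|E[(-1)^maj]| ≤ (11 + 7 B·P)/16` on the bias of the majority
bit of one no-signaling box at one input `v ∈ U₀ ∪ U₁` (`abs_bias_le`). Given it, the XOR of
independent bits has bias `2q - 1 = ∏_j E[(-1)^{m_j}]`, and the factors are bounded one by one.

The single-box bound is weak linear programming duality. The no-signaling conditions say that the
correlator of a set `S` of parties depends only on the inputs in `S`; hence a linear functional
`∑ g(x,u) P(x|u)` vanishes on all no-signaling boxes once its coefficients in terms of
correlators vanish (`sum_eq_zero_of_null`). It then suffices to find such a null `g` lying
pointwise below `7 B(x,u) + [u = v] (11 ∓ 16 (-1)^maj(x))`, since pairing with the nonnegative `P`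
gives `0 ≤ 7 B·P + 11 ∓ 16 E[(-1)^maj]`.

Local relabellings of inputs and outputs (`flips`) reduce all eight inputs `v` and both signs to a
single situation, whose game is symmetric under permutations of the parties: distinguished input `0000`, and
losing outputs those of even parity for inputs of weight `0` or `4` and of odd parity for inputs of
weight `2`. There `nullCoeff` is an explicit null functional, and its two properties
(`nullCoeff_null`, `dual_le`) are finite checks over the integers.
-/

open Finset

/-- The set `U₀` of measurement settings (bits written as booleans, `0 ↔ false`). -/
def U0 : Finset (Fin 4 → Bool) :=
  { ![false,false,false,true], ![false,false,true,false],
    ![false,true,false,false], ![true,false,false,false] }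

/-- The set `U₁` of measurement settings. -/
def U1 : Finset (Fin 4 → Bool) :=
  { ![false,true,true,true], ![true,false,true,true],
    ![true,true,false,true], ![true,true,true,false] }

/-- XOR of the four output bits. -/
def parity4 (x : Fin 4 → Bool) : Bool := xor (x 0) (xor (x 1) (xor (x 2) (x 3)))

/-- The Bell coefficient `B(x,u)`. -/
def BellCoeff (x u : Fin 4 → Bool) : ℝ :=
  if (u ∈ U0 ∧ parity4 x = false) ∨ (u ∈ U1 ∧ parity4 x = true) then 1 else 0

/-- The Bell value `B·P = ∑_{u ∈ U₀ ∪ U₁} ∑_x B(x,u) P(x|u)` of a box `P`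
(`P x u` denotes `P(x|u)`). -/
def BellValue (P : (Fin 4 → Bool) → (Fin 4 → Bool) → ℝ) : ℝ :=
  ∑ u ∈ U0 ∪ U1, ∑ x : Fin 4 → Bool, BellCoeff x u * P x u

/-- `P` is a 4-partite box: nonnegative and normalized for every input. -/
def IsBox (P : (Fin 4 → Bool) → (Fin 4 → Bool) → ℝ) : Prop :=
  (∀ x u, 0 ≤ P x u) ∧ (∀ u, ∑ x : Fin 4 → Bool, P x u = 1)

/-- `P` is no-signaling: for every proper subset `S` of the four parties, the marginal
distribution of the outputs of the parties in `S` depends only on the inputs in `S`. -/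
def NoSignaling (P : (Fin 4 → Bool) → (Fin 4 → Bool) → ℝ) : Prop :=
  ∀ S : Finset (Fin 4), S ≠ univ →
    ∀ u u' : Fin 4 → Bool, (∀ i ∈ S, u i = u' i) →
      ∀ y : Fin 4 → Bool,
        ∑ x ∈ univ.filter (fun x : Fin 4 → Bool => ∀ i ∈ S, x i = y i), P x u =
        ∑ x ∈ univ.filter (fun x : Fin 4 → Bool => ∀ i ∈ S, x i = y i), P x u'

/-- Majority of three bits: `false` iff at least two of the three bits are `false`. -/
def maj (a b c : Bool) : Bool := (a && b) || (a && c) || (b && c)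

/-- The Walsh character `(-1)^{∑_{i ∈ S} x_i}`, the subset `S` being given by its indicator. -/
def walsh (S x : Fin 4 → Bool) : ℤ :=
  if parity4 (fun i => S i && x i) then -1 else 1

/-- The correlator `E_S(u)`: the expectation of the character `walsh S` at input `u`. -/
def corr (S : Fin 4 → Bool) (P : (Fin 4 → Bool) → (Fin 4 → Bool) → ℝ) (u : Fin 4 → Bool) : ℝ :=
  ∑ x, (walsh S x : ℝ) * P x u

/-- The dual certificate, in the frame where the distinguished input is `w = 0000` and the Bell
game asks for odd output parity when `|w| ∈ {0, 4}` and even output parity when `|w| = 2`. It is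
invariant under permutations of the parties: `a` and `b` count the outputs equal to `1` among the
parties with input `0` and input `1`. The values were obtained by solving the linear program dual
to maximizing the bias over no-signaling boxes; positive entries with `w ≠ 0` sit only on losing
outputs, and the quadratic at `w = 0` lies below `11 + 7·[losing] - 16·(-1)^maj`. -/
def nullCoeff (x w : Fin 4 → Bool) : ℤ :=
  let a : ℕ := ∑ i, (!w i && x i).toNat
  let b : ℕ := ∑ i, (w i && x i).toNat
  match (∑ i, (w i).toNat : ℕ) with
  | 0 => 3 * (a : ℤ) ^ 2 - 2 * a - 6
  | 2 => if b = 1 then (if a = 0 then 2 else if a = 2 then -8 else 0)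
         else (if a = 1 then 3 else 0)
  | 3 => if a = 1 ∧ (b = 0 ∨ b = 3) then -10 else 0
  | 4 => if b = 2 then -2 else if b = 0 ∨ b = 4 then 6 else 0
  | _ => 0

/-- Output flips which, together with the shift `u ↦ u ⊕ v` of the inputs, bring the Bell game
seen from the distinguished input `v ∈ U₀ ∪ U₁` into the frame of `nullCoeff`. The flip of party `i`
depends on `u i` alone. The party whose bit of `v` differs from the three others flips when its
input differs from that of `v`; party `3`, which does not enter the majority, always flips if
`v ∈ U₁`. The bit `s` flips all outputs, which keeps the parity and negates the majority. -/
def flips (v : Fin 4 → Bool) (s : Bool) (u : Fin 4 → Bool) : Fin 4 → Bool := fun i =>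
  xor s (xor (xor (u i) (v i) && xor (v i) (decide (v ∈ U1))) (decide (i = 3) && decide (v ∈ U1)))

/-- The certificate `nullCoeff` transported to the original labelling, for the distinguished
input `v` and the sign `(-1)^s` of the bias. -/
def dual (v : Fin 4 → Bool) (s : Bool) (x u : Fin 4 → Bool) : ℤ :=
  nullCoeff (fun i => xor (x i) (flips v s u i)) (fun i => xor (u i) (v i))

theorem walsh_orth : ∀ x y : Fin 4 → Bool,
    ∑ S, walsh S x * walsh S y = if x = y then 16 else 0 := by
  decide +kernel

theorem walsh_xor (S x c : Fin 4 → Bool) :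
    walsh S (fun i => xor (x i) (c i)) = walsh S x * walsh S c := by
  have h : parity4 (fun i => S i && xor (x i) (c i)) =
      xor (parity4 fun i => S i && x i) (parity4 fun i => S i && c i) := by
    simp only [parity4, Bool.and_xor_distrib_left, Bool.xor_assoc,
      Bool.xor_left_comm]
  unfold walsh
  rw [h]
  cases parity4 (fun i => S i && x i) <;> cases parity4 (fun i => S i && c i) <;> simp

/-- `nullCoeff` is annihilated by every no-signaling box: for each set `S` of parties and inputs `t`
on `S`, the coefficient of the correlator `E_S(t)` vanishes. See `sum_eq_zero_of_null`. -/
theorem nullCoeff_null : ∀ S t : Fin 4 → Bool,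
    ∑ w with (fun i => S i && w i) = t, ∑ x, walsh S x * nullCoeff x w = 0 := by
  decide +kernel

theorem sum_xor (c : Fin 4 → Bool) (F : (Fin 4 → Bool) → ℤ) :
    ∑ x : Fin 4 → Bool, F (fun i => xor (x i) (c i)) = ∑ x, F x := by
  have hinv : Function.Involutive fun (x : Fin 4 → Bool) i => xor (x i) (c i) := by
    intro x
    funext i
    simp
  exact Equiv.sum_comp hinv.toPerm F

/-- A local relabelling multiplies the coefficient of each correlator by a sign, so the null property
of `nullCoeff` carries over to `dual`. -/
theorem dual_null (v : Fin 4 → Bool) (s : Bool) (S t : Fin 4 → Bool) :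
    ∑ u with (fun i => S i && u i) = t, ∑ x, walsh S x * dual v s x u = 0 := by
  have hinner : ∀ u ∈ univ.filter (fun u : Fin 4 → Bool => (fun i => S i && u i) = t),
      ∑ x, walsh S x * dual v s x u = walsh S (flips v s t) *
        ∑ y, walsh S y * nullCoeff y (fun i => xor (u i) (v i)) := by
    intro u hu
    rw [mem_filter] at hu
    have hflip : walsh S (flips v s t) = walsh S (flips v s u) := by
      rw [← hu.2]
      unfold walsh
      congr 3
      funext i
      cases hS : S i <;> simp [flips, hS]
    rw [hflip, ← sum_xor (flips v s u) fun y => walsh S y * nullCoeff y fun i => xor (u i) (v i),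
      mul_sum]
    refine sum_congr rfl fun x _ => ?_
    have hsq : walsh S (flips v s u) * walsh S (flips v s u) = 1 := by
      unfold walsh
      split_ifs <;> norm_num
    rw [walsh_xor, dual]
    linear_combination (-(walsh S x * nullCoeff (fun i => xor (x i) (flips v s u i))
      (fun i => xor (u i) (v i)))) * hsq
  have hfilter : ∀ u : Fin 4 → Bool, (fun i => S i && u i) = t ↔
      (fun i => S i && xor (u i) (v i)) = fun i => xor (t i) (S i && v i) := by
    intro u
    simp only [funext_iff]
    refine forall_congr' fun i => ?_
    cases S i <;> cases u i <;> cases v i <;> cases t i <;> decide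
  rw [sum_congr rfl hinner, ← mul_sum, sum_filter]
  simp_rw [hfilter]
  rw [sum_xor v fun w => if (fun i => S i && w i) = (fun i => xor (t i) (S i && v i)) then
    ∑ y, walsh S y * nullCoeff y w else 0, ← sum_filter, nullCoeff_null, mul_zero]

/-- Integer version of `BellCoeff`, on which inequalities are decidable. -/
def bellInt (x u : Fin 4 → Bool) : ℤ :=
  if (u ∈ U0 ∧ parity4 x = false) ∨ (u ∈ U1 ∧ parity4 x = true) then 1 else 0

/-- Feasibility of the certificate: it lies pointwise below the functional
`7 · B·P + 11 - 16 · (-1)^s · E[(-1)^maj]`. -/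
theorem dual_le : ∀ v ∈ U0 ∪ U1, ∀ s : Bool, ∀ x u : Fin 4 → Bool,
    dual v s x u ≤ 7 * bellInt x u +
      if u = v then 11 - 16 * (if xor s (maj (x 0) (x 1) (x 2)) then -1 else 1) else 0 := by
  decide +kernel

/-- In a no-signaling box, `E_S(u)` depends only on the inputs of the parties in `S`; the other
inputs may be set to `0`. -/
theorem corr_eq {P : (Fin 4 → Bool) → (Fin 4 → Bool) → ℝ} (hns : NoSignaling P)
    (S u : Fin 4 → Bool) : corr S P u = corr S P (fun i => S i && u i) := by
  by_cases hS : S = fun _ => true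
  · simp [hS]
  have hT : (univ.filter fun i => S i = true) ≠ univ := by
    intro h
    apply hS
    funext i
    exact (mem_filter.mp (h.symm ▸ mem_univ i : i ∈ univ.filter fun i => S i = true)).2
  have hmarg := hns _ hT u (fun i => S i && u i) (by simp +contextual)
  unfold corr
  rw [← sum_fiberwise univ (fun x : Fin 4 → Bool => fun i => S i && x i)
      (fun x => (walsh S x : ℝ) * P x u),
    ← sum_fiberwise univ (fun x : Fin 4 → Bool => fun i => S i && x i)
      (fun x => (walsh S x : ℝ) * P x fun i => S i && u i)]
  refine sum_congr rfl fun y _ => ?_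
  have key : ∀ w, ∑ x with (fun i => S i && x i) = y, (walsh S x : ℝ) * P x w =
      (if parity4 y then -1 else 1) * ∑ x with (fun i => S i && x i) = y, P x w := by
    intro w
    rw [mul_sum]
    refine sum_congr rfl fun x hx => ?_
    rw [mem_filter] at hx
    rw [walsh, hx.2]
    split_ifs <;> simp
  rw [key, key]
  congr 1
  -- If `y` is supported in `S`, its fibre is a marginal event; otherwise the fibre is empty.
  by_cases hy : ∃ z : Fin 4 → Bool, (fun i => S i && z i) = y
  · obtain ⟨z, rfl⟩ := hy
    have hf : (univ.filter fun x : Fin 4 → Bool => (fun i => S i && x i) = fun i => S i && z i) =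
        univ.filter fun x : Fin 4 → Bool => ∀ i ∈ univ.filter (fun i => S i = true), x i = z i := by
      ext x
      simp only [mem_filter, mem_univ, true_and, funext_iff]
      refine forall_congr' fun i => ?_
      cases S i <;> simp
    rw [hf]
    exact hmarg z
  · have hf : (univ.filter fun x : Fin 4 → Bool => (fun i => S i && x i) = y) = ∅ := by
      ext x
      simp only [mem_filter, mem_univ, true_and, notMem_empty, iff_false]
      exact fun h => hy ⟨x, h⟩
    rw [hf]
    simp

/-- A functional on boxes vanishes on all no-signaling boxes as soon as, for every `S`, its Walsh
coefficients at `S`, summed over all inputs with the same restriction to `S`, vanish: by Parseval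
it is a combination of correlators, and these depend only on that restriction. -/
theorem sum_eq_zero_of_null {P : (Fin 4 → Bool) → (Fin 4 → Bool) → ℝ} (hns : NoSignaling P)
    (g : (Fin 4 → Bool) → (Fin 4 → Bool) → ℤ)
    (hg : ∀ S t : Fin 4 → Bool,
      ∑ u with (fun i => S i && u i) = t, ∑ x, walsh S x * g x u = 0) :
    ∑ u, ∑ x, (g x u : ℝ) * P x u = 0 := by
  have parseval : ∀ u, 16 * ∑ x, (g x u : ℝ) * P x u =
      ∑ S, ((∑ x, walsh S x * g x u : ℤ) : ℝ) * corr S P u := by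
    intro u
    have h1 : ∀ S, ((∑ x, walsh S x * g x u : ℤ) : ℝ) * corr S P u =
        ∑ x, ∑ y, ((walsh S x * walsh S y : ℤ) : ℝ) * (g x u * P y u) := by
      intro S
      rw [corr]
      push_cast
      rw [sum_mul_sum]
      refine sum_congr rfl fun x _ => sum_congr rfl fun y _ => by ring
    simp_rw [h1]
    rw [sum_comm, mul_sum]
    refine sum_congr rfl fun x _ => ?_
    rw [sum_comm]
    simp_rw [← sum_mul, ← Int.cast_sum, walsh_orth]
    simp
  have h16 : 16 * ∑ u, ∑ x, (g x u : ℝ) * P x u = 0 := by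
    rw [mul_sum]
    simp_rw [parseval]
    rw [sum_comm]
    refine sum_eq_zero fun S _ => ?_
    rw [← sum_fiberwise univ (fun u : Fin 4 → Bool => fun i => S i && u i)]
    refine sum_eq_zero fun t _ => ?_
    have : ∀ u ∈ univ.filter (fun u : Fin 4 → Bool => (fun i => S i && u i) = t),
        ((∑ x, walsh S x * g x u : ℤ) : ℝ) * corr S P u =
          ((∑ x, walsh S x * g x u : ℤ) : ℝ) * corr S P t := by
      intro u hu
      rw [mem_filter] at hu
      rw [corr_eq hns S u, hu.2]
    rw [sum_congr rfl this, ← sum_mul, ← Int.cast_sum, hg]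
    simp
  linarith

/-- The sign `(-1)^maj` of an output string. -/
def majSign (x : Fin 4 → Bool) : ℝ := if maj (x 0) (x 1) (x 2) = true then -1 else 1

theorem bellValue_eq (P : (Fin 4 → Bool) → (Fin 4 → Bool) → ℝ) :
    BellValue P = ∑ u, ∑ x, (bellInt x u : ℝ) * P x u := by
  have hc : ∀ x u, BellCoeff x u = (bellInt x u : ℝ) := by
    intro x u
    unfold BellCoeff bellInt
    split_ifs <;> simp
  unfold BellValue
  simp_rw [hc]
  refine sum_subset (subset_univ _) fun u _ hu => sum_eq_zero fun x _ => ?_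
  rw [mem_union, not_or] at hu
  simp [bellInt, hu.1, hu.2]

/-- Weak linear programming duality: the functional bounding `dual` from above is nonnegative on the
box, because `dual` evaluates to `0` there. -/
theorem signed_bias_le {P : (Fin 4 → Bool) → (Fin 4 → Bool) → ℝ} (hbox : IsBox P)
    (hns : NoSignaling P) {v : Fin 4 → Bool} (hv : v ∈ U0 ∪ U1) (s : Bool) :
    (if s then -1 else 1) * ∑ x, majSign x * P x v ≤ (11 + 7 * BellValue P) / 16 := by
  have hnull := sum_eq_zero_of_null hns (dual v s) (dual_null v s)
  have hle : ∑ u, ∑ x, (dual v s x u : ℝ) * P x u ≤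
      ∑ u, ∑ x, (7 * (bellInt x u : ℝ) +
        if u = v then 11 - 16 * ((if s then -1 else 1) * majSign x) else 0) * P x u := by
    refine sum_le_sum fun u _ => sum_le_sum fun x _ =>
      mul_le_mul_of_nonneg_right ?_ (hbox.1 x u)
    have h := (Int.cast_le (R := ℝ)).mpr (dual_le v hv s x u)
    refine h.trans_eq ?_
    unfold majSign
    cases s <;> cases maj (x 0) (x 1) (x 2) <;> by_cases huv : u = v <;> simp [huv] <;> norm_num
  have hsplit : ∑ u, ∑ x, (7 * (bellInt x u : ℝ) +
        if u = v then 11 - 16 * ((if s then -1 else 1) * majSign x) else 0) * P x u =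
      7 * BellValue P + (11 - 16 * ((if s then -1 else 1) * ∑ x, majSign x * P x v)) := by
    simp_rw [add_mul, sum_add_distrib]
    congr 1
    · rw [bellValue_eq, mul_sum]
      simp_rw [mul_sum, mul_assoc]
    · rw [sum_eq_single v (fun u _ hu => by simp [hu]) (by simp)]
      have h1 := hbox.2 v
      simp only [if_true, sub_mul, sum_sub_distrib]
      rw [← mul_sum, h1, mul_sum, mul_sum, mul_one]
      congr 1
      refine sum_congr rfl fun x _ => by ring
  rw [hnull, hsplit] at hle
  linarith

theorem abs_bias_le {P : (Fin 4 → Bool) → (Fin 4 → Bool) → ℝ} (hbox : IsBox P)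
    (hns : NoSignaling P) {v : Fin 4 → Bool} (hv : v ∈ U0 ∪ U1) :
    |∑ x, majSign x * P x v| ≤ (11 + 7 * BellValue P) / 16 := by
  have h0 := signed_bias_le hbox hns hv false
  have h1 := signed_bias_le hbox hns hv true
  simp only [if_true, Bool.false_eq_true, if_false] at h0 h1
  exact abs_le.mpr ⟨by linarith, by linarith⟩

/-- The character `(-1)^·` of `ZMod 2` turns the XOR of bits into the product of their signs. -/
theorem prod_sign {ι : Type*} (s : Finset ι) (m : ι → Bool) :
    ∏ j ∈ s, (if m j = true then (-1 : ℝ) else 1) =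
      if (∑ j ∈ s, (if m j = true then (1 : ZMod 2) else 0)) = 0 then 1 else -1 := by
  classical
  induction s using Finset.induction_on with
  | empty => simp
  | insert a s ha ih =>
    rw [prod_insert ha, sum_insert ha, ih]
    generalize (∑ j ∈ s, (if m j = true then (1 : ZMod 2) else 0)) = z
    have h10 : (1 : ZMod 2) ≠ 0 := by decide
    have h11 : (1 + 1 : ZMod 2) = 0 := by decide
    have hz : z = 0 ∨ z = 1 := by revert z; decide
    cases m a <;> rcases hz with rfl | rfl <;> simp [h11]

/-- Given `k` no-signaling boxes each with Bell value at most `δ`, fixed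
inputs `u*_j ∈ U₀ ∪ U₁`, and outputs of the boxes mutually independent (the joint
distribution of the output tuple is the product `∏_j P_j(x_j | u*_j)`), the probability `q`
that the XOR (sum in `ZMod 2`) of the majority bits `maj(x¹_j, x²_j, x³_j)` equals `0`
satisfies `|q − 1/2| ≤ (1/2)·((11+7δ)/16)^k`. -/
theorem xor_of_majorities_of_independent_boxes
    (δ : ℝ) (hδ : 0 ≤ δ) (k : ℕ)
    (P : Fin k → (Fin 4 → Bool) → (Fin 4 → Bool) → ℝ)
    (hbox : ∀ j, IsBox (P j)) (hns : ∀ j, NoSignaling (P j))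
    (hbell : ∀ j, BellValue (P j) ≤ δ)
    (ustar : Fin k → (Fin 4 → Bool)) (hu : ∀ j, ustar j ∈ U0 ∪ U1) :
    |(∑ x ∈ univ.filter (fun x : Fin k → (Fin 4 → Bool) =>
          (∑ j, (if maj (x j 0) (x j 1) (x j 2) = true then (1 : ZMod 2) else 0)) = 0),
        ∏ j, P j (x j) (ustar j)) - 1/2|
      ≤ (1/2) * ((11 + 7*δ)/16)^k := by
  have hind : ∀ x : Fin k → (Fin 4 → Bool),
      (if (∑ j, (if maj (x j 0) (x j 1) (x j 2) = true then (1 : ZMod 2) else 0)) = 0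
        then ∏ j, P j (x j) (ustar j) else 0) =
      1/2 * ∏ j, P j (x j) (ustar j) + 1/2 * ∏ j, majSign (x j) * P j (x j) (ustar j) := by
    intro x
    have h := prod_sign univ fun j => maj (x j 0) (x j 1) (x j 2)
    rw [prod_mul_distrib]
    simp only [majSign]
    rw [h]
    split_ifs <;> ring
  have hone : ∑ x : Fin k → (Fin 4 → Bool), ∏ j, P j (x j) (ustar j) = 1 := by
    rw [← Fintype.prod_sum fun j y => P j y (ustar j)]
    exact prod_eq_one fun j _ => (hbox j).2 (ustar j)
  rw [sum_filter, sum_congr rfl fun x _ => hind x, sum_add_distrib, ← mul_sum, ← mul_sum, hone,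
    ← Fintype.prod_sum fun j y => majSign y * P j y (ustar j), mul_one, add_sub_cancel_left,
    abs_mul, abs_of_pos (by norm_num : (0 : ℝ) < 1/2), abs_prod]
  refine mul_le_mul_of_nonneg_left ?_ (by norm_num)
  calc ∏ j, |∑ y, majSign y * P j y (ustar j)| ≤ ∏ _j : Fin k, (11 + 7*δ)/16 :=
        prod_le_prod (fun j _ => abs_nonneg _) fun j _ =>
          (abs_bias_le (hbox j) (hns j) (hu j)).trans (by linarith [hbell j])
    _ = ((11 + 7*δ)/16)^k := by rw [prod_const, card_univ, Fintype.card_fin]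
end

section
/- Let A and Σ be finite nonempty sets, let n ≥ 2 be a power of two, let ε ∈ [0,1/2), and let p be a probability distribution on A × Σⁿ with coordinates (A, X₁, …, X_n). Let ν be a probability distribution on {1,…,n} satisfying ν(j) ≤ (1/2 + ε)^{log₂ n} for every j (as holds when j is selected using log₂ n bits produced by an ε-Santha–Vazirani source). Then ∑_{j=1}^{n} ν(j) · E_{(a,x)∼p} ‖ p_{A, X_j | X_{<j}=x_{<j}} − p_{A | X_{<j}=x_{<j}} ⊗ p_{X_j | X_{<j}=x_{<j}} ‖₁ ≤ √( 2·ln(2) · n^{log₂(1+2ε)} · log₂|A| / n ). -/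
/-!
The bound is the average of a conditional Pinsker inequality, combined with the chain rule for
mutual information.

Write `M = (1/2 + ε) ^ log₂ n`. By Cauchy–Schwarz for the probability weights `ν j * p az`, the
square of the left-hand side is at most `∑ j, ν j * E (condL1 p j) ^ 2 ≤ M * ∑ j, E (condL1 p j) ^ 2`.
Pinsker's inequality (`pinsker`) bounds `(condL1 p j x) ^ 2` by twice the relative entropy `condKL` of
the conditional joint law to the product of its marginals. By the tower property
(`sum_condKL_eq`), the expectation of this relative entropy is the expectation of the log-likelihood
ratio at the sampled point itself, which equals
`log P(a | x_{≤ j}) - log P(a | x_{< j})` (`llr_eq_sub`). These differences telescope over `j`, so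
their sum is at most `E (-log P(a)) = H(A) ≤ log |A|` (`sum_sum_condKL_le`, `entropy_le`). Finally
`M = n ^ log₂ (1 + 2ε) / n`.

Pinsker's inequality itself comes from the pointwise bound
`3 (t - 1)² ≤ (2t + 4) (t log t + 1 - t)` for `t > 0` and one more Cauchy–Schwarz.
-/

open Finset

noncomputable section

variable {A S : Type*} [Fintype A] [Fintype S] [DecidableEq A] [DecidableEq S]
variable {n : ℕ}

/-- Probability (under `p`) of the history `x_{<i}` of the string `x`. -/
def histP (p : A × (Fin n → S) → ℝ) (i : Fin n) (x : Fin n → S) : ℝ :=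
  ∑ az ∈ univ.filter (fun az : A × (Fin n → S) => ∀ j : Fin n, j < i → az.2 j = x j), p az

/-- Conditional joint distribution of `(A, X_i)` given the history `x_{<i}`. -/
def condJoint (p : A × (Fin n → S) → ℝ) (i : Fin n) (x : Fin n → S) (b : A) (s : S) : ℝ :=
  (∑ az ∈ univ.filter (fun az : A × (Fin n → S) =>
      (∀ j : Fin n, j < i → az.2 j = x j) ∧ az.1 = b ∧ az.2 i = s), p az) / histP p i x

/-- Conditional distribution of `A` given the history `x_{<i}`. -/
def condA (p : A × (Fin n → S) → ℝ) (i : Fin n) (x : Fin n → S) (b : A) : ℝ :=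
  (∑ az ∈ univ.filter (fun az : A × (Fin n → S) =>
      (∀ j : Fin n, j < i → az.2 j = x j) ∧ az.1 = b), p az) / histP p i x

/-- Conditional distribution of `X_i` given the history `x_{<i}`. -/
def condX (p : A × (Fin n → S) → ℝ) (i : Fin n) (x : Fin n → S) (s : S) : ℝ :=
  (∑ az ∈ univ.filter (fun az : A × (Fin n → S) =>
      (∀ j : Fin n, j < i → az.2 j = x j) ∧ az.2 i = s), p az) / histP p i x

/-- ℓ₁ distance between the conditional joint distribution of `(A, X_i)` given the history
`x_{<i}` and the product of its marginals. -/
def condL1 (p : A × (Fin n → S) → ℝ) (i : Fin n) (x : Fin n → S) : ℝ :=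
  ∑ b : A, ∑ s : S, |condJoint p i x b s - condA p i x b * condX p i x s|

end

open scoped BigOperators

/-! ### Pinsker's inequality -/

/-- The difference of the two sides has derivative `(t - 1)³ / (t² (t + 2)²)`, so it is minimal at
`t = 1`, where it vanishes. -/
lemma log_ge_rational {t : ℝ} (ht : 0 < t) :
    (5 * t ^ 2 - 4 * t - 1) / (2 * t ^ 2 + 4 * t) ≤ Real.log t := by
  set g : ℝ → ℝ := fun t => Real.log t - (5 * t ^ 2 - 4 * t - 1) / (2 * t ^ 2 + 4 * t) with hg
  have hd : ∀ u : ℝ, 0 < u → HasDerivAt g ((u - 1) ^ 3 / (u ^ 2 * (u + 2) ^ 2)) u := by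
    intro u hu
    have h0 : 2 * u ^ 2 + 4 * u ≠ 0 := by positivity
    have h1 : HasDerivAt (fun t : ℝ => 5 * t ^ 2 - 4 * t - 1) (10 * u - 4) u := by
      have := ((((hasDerivAt_id u).pow 2).const_mul 5).sub
        ((hasDerivAt_id u).const_mul 4)).sub_const 1
      refine this.congr_deriv ?_
      simp; ring
    have h2 : HasDerivAt (fun t : ℝ => 2 * t ^ 2 + 4 * t) (4 * u + 4) u := by
      have := (((hasDerivAt_id u).pow 2).const_mul 2).add ((hasDerivAt_id u).const_mul 4)
      refine this.congr_deriv ?_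
      simp; ring
    refine ((Real.hasDerivAt_log hu.ne').sub (h1.div h2 h0)).congr_deriv ?_
    have : u + 2 ≠ 0 := by positivity
    have h3 : 2 * u ^ 2 + 4 * u = 2 * (u * (u + 2)) := by ring
    rw [h3]
    field_simp
    ring
  have hc : ∀ s ⊆ Set.Ioi (0 : ℝ), ContinuousOn g s := fun s hs u hu =>
    (hd u (hs hu)).continuousAt.continuousWithinAt
  have hg1 : g 1 = 0 := by simp [hg]; norm_num
  suffices 0 ≤ g t by simp only [hg] at this; linarith
  rw [← hg1]
  rcases le_total 1 t with h | h
  · have hmono : MonotoneOn g (Set.Ici 1) := by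
      refine monotoneOn_of_deriv_nonneg (convex_Ici 1)
        (hc _ fun u hu => lt_of_lt_of_le (one_pos (α := ℝ)) hu) ?_ ?_
      · intro u hu
        rw [interior_Ici] at hu
        exact (hd u (one_pos.trans hu)).differentiableAt.differentiableWithinAt
      · intro u hu
        rw [interior_Ici] at hu
        have hu' : (1 : ℝ) < u := hu
        rw [(hd u (one_pos.trans hu')).deriv]
        have : 0 ≤ u - 1 := by linarith
        positivity
    exact hmono (Set.self_mem_Ici) h h
  · have hanti : AntitoneOn g (Set.Ioc 0 1) := by
      refine antitoneOn_of_deriv_nonpos (convex_Ioc 0 1) (hc _ fun u hu => hu.1) ?_ ?_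
      · intro u hu
        rw [interior_Ioc] at hu
        exact (hd u hu.1).differentiableAt.differentiableWithinAt
      · intro u hu
        rw [interior_Ioc] at hu
        rw [(hd u hu.1).deriv]
        have h1 : 0 < 1 - u := by linarith [hu.2]
        have h2 := hu.1
        have h3 : (u - 1) ^ 3 = -((1 - u) ^ 3) := by ring
        rw [h3, neg_div, neg_nonpos]
        positivity
    exact hanti ⟨ht, h⟩ ⟨one_pos, le_rfl⟩ h

/-- The homogeneous form, with `t = x / y`, of `3 (t - 1)² ≤ (2t + 4) (t log t + 1 - t)`. -/
lemma sq_sub_le_kl {x y : ℝ} (hx : 0 ≤ x) (hy : 0 ≤ y) (hxy : y = 0 → x = 0) :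
    (x - y) ^ 2 ≤ (2 * x + 4 * y) / 3 * (x * Real.log (x / y) + y - x) := by
  rcases hy.eq_or_lt with hy0 | hy
  · rw [hxy hy0.symm, ← hy0]; simp
  rcases hx.eq_or_lt with hx0 | hx
  · rw [← hx0]; simp; nlinarith
  have h := log_ge_rational (div_pos hx hy)
  have e : (5 * (x / y) ^ 2 - 4 * (x / y) - 1) / (2 * (x / y) ^ 2 + 4 * (x / y))
      = (5 * x ^ 2 - 4 * x * y - y ^ 2) / (x * (2 * x + 4 * y)) := by
    have : 2 * (x / y) ^ 2 + 4 * (x / y) = x * (2 * x + 4 * y) / y ^ 2 := by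
      field_simp
    rw [this]
    field_simp
  rw [e, div_le_iff₀ (by positivity)] at h
  nlinarith

/-- Pinsker's inequality on a finite type. -/
lemma pinsker {ι : Type*} [Fintype ι] (P Q : ι → ℝ) (hP : ∀ i, 0 ≤ P i) (hQ : ∀ i, 0 ≤ Q i)
    (hP1 : ∑ i, P i = 1) (hQ1 : ∑ i, Q i = 1) (hPQ : ∀ i, Q i = 0 → P i = 0) :
    (∑ i, |P i - Q i|) ^ 2 ≤ 2 * ∑ i, P i * Real.log (P i / Q i) := by
  have key := fun i => sq_sub_le_kl (hP i) (hQ i) (hPQ i)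
  have hnn : ∀ i, 0 ≤ P i * Real.log (P i / Q i) + Q i - P i := by
    intro i
    rcases (hQ i).eq_or_lt with h0 | h0
    · rw [hPQ i h0.symm, ← h0]; simp
    · have := key i
      have h1 : 0 < (2 * P i + 4 * Q i) / 3 := by have := hP i; positivity
      exact nonneg_of_mul_nonneg_right ((sq_nonneg _).trans this) h1
  have hcs := Finset.sum_sq_le_sum_mul_sum_of_sq_le_mul Finset.univ (r := fun i => |P i - Q i|)
    (f := fun i => (2 * P i + 4 * Q i) / 3)
    (g := fun i => P i * Real.log (P i / Q i) + Q i - P i)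
    (fun i _ => by have := hP i; have := hQ i; positivity) (fun i _ => hnn i)
    (fun i _ => by rw [sq_abs]; exact key i)
  have e1 : ∑ i, (2 * P i + 4 * Q i) / 3 = 2 := by
    rw [← Finset.sum_div, Finset.sum_add_distrib, ← Finset.mul_sum, ← Finset.mul_sum, hP1, hQ1]
    norm_num
  have e2 : ∑ i, (P i * Real.log (P i / Q i) + Q i - P i) = ∑ i, P i * Real.log (P i / Q i) := by
    rw [Finset.sum_sub_distrib, Finset.sum_add_distrib, hP1, hQ1]; ring
  rw [e1, e2] at hcs
  exact hcs

/-- The entropy of a distribution on `A` is at most `log |A|`. -/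
lemma entropy_le {A : Type*} [Fintype A] [Nonempty A] (P : A → ℝ) (hP : ∀ a, 0 ≤ P a)
    (hP1 : ∑ a, P a = 1) : ∑ a, P a * -Real.log (P a) ≤ Real.log (Fintype.card A) := by
  have hc : (0 : ℝ) < Fintype.card A := by exact_mod_cast Fintype.card_pos
  have h : ∀ a, P a * -Real.log (P a) ≤
      P a * Real.log (Fintype.card A) + ((Fintype.card A : ℝ)⁻¹ - P a) := by
    intro a
    rcases (hP a).eq_or_lt with h0 | h0
    · rw [← h0]; simp
    · have := Real.log_le_sub_one_of_pos (x := ((Fintype.card A : ℝ) * P a)⁻¹) (by positivity)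
      rw [Real.log_inv, Real.log_mul hc.ne' h0.ne'] at this
      have h2 := mul_le_mul_of_nonneg_left this h0.le
      have h3 : P a * (((Fintype.card A : ℝ) * P a)⁻¹ - 1) = (Fintype.card A : ℝ)⁻¹ - P a := by
        field_simp
      rw [h3] at h2
      linarith
  refine (Finset.sum_le_sum fun a _ => h a).trans ?_
  rw [Finset.sum_add_distrib, ← Finset.sum_mul, Finset.sum_sub_distrib, hP1]
  simp [hc.ne']

/-! ### Conditional laws and relative entropy -/

section Cond

variable {A S : Type*} [Fintype A] [Fintype S] [DecidableEq A] [DecidableEq S] {n : ℕ}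

/-- The probability that the first `k` letters agree with `x`, for `0 ≤ k ≤ n`. -/
noncomputable def prefixP (p : A × (Fin n → S) → ℝ) (k : ℕ) (x : Fin n → S) : ℝ :=
  ∑ az ∈ univ.filter (fun az : A × (Fin n → S) => ∀ j : Fin n, j.val < k → az.2 j = x j), p az

/-- The probability that the first `k` letters agree with `x` and the `A`-coordinate is `b`. -/
noncomputable def prefixAP (p : A × (Fin n → S) → ℝ) (k : ℕ) (x : Fin n → S) (b : A) : ℝ :=
  ∑ az ∈ univ.filter (fun az : A × (Fin n → S) =>
    (∀ j : Fin n, j.val < k → az.2 j = x j) ∧ az.1 = b), p az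

/-- The log-likelihood ratio between the conditional law of `(A, X_i)` given `x_{<i}` and the
product of its marginals. -/
noncomputable def llr (p : A × (Fin n → S) → ℝ) (i : Fin n) (x : Fin n → S) (b : A) (s : S) : ℝ :=
  Real.log (condJoint p i x b s / (condA p i x b * condX p i x s))

/-- The relative entropy (in nats) between the conditional law of `(A, X_i)` given `x_{<i}` and the
product of its marginals; its expectation is the mutual information `I(A; X_i | X_{<i})`. -/
noncomputable def condKL (p : A × (Fin n → S) → ℝ) (i : Fin n) (x : Fin n → S) : ℝ :=
  ∑ b, ∑ s, condJoint p i x b s * llr p i x b s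

variable {p : A × (Fin n → S) → ℝ}

lemma sum_condJoint_mul (i : Fin n) (x : Fin n → S) (φ : A → S → ℝ) :
    ∑ b, ∑ s, condJoint p i x b s * φ b s =
      (∑ az ∈ univ.filter (fun az : A × (Fin n → S) => ∀ j : Fin n, j < i → az.2 j = x j),
        p az * φ az.1 (az.2 i)) / histP p i x := by
  simp only [condJoint, div_mul_eq_mul_div, ← Finset.sum_div]
  congr 1
  simp only [Finset.sum_filter, Finset.sum_mul]
  simp_rw [Finset.sum_comm (s := (univ : Finset S))]
  rw [Finset.sum_comm]
  refine Finset.sum_congr rfl fun az _ => ?_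
  by_cases h : ∀ j : Fin n, j < i → az.2 j = x j
  · simp [ite_and]
  · simp [h]

lemma sum_condJoint_right (i : Fin n) (x : Fin n → S) (b : A) :
    ∑ s, condJoint p i x b s = condA p i x b := by
  simp only [condJoint, condA, ← Finset.sum_div]
  congr 1
  simp only [Finset.sum_filter]
  rw [Finset.sum_comm]
  refine Finset.sum_congr rfl fun az _ => ?_
  by_cases h : (∀ j : Fin n, j < i → az.2 j = x j)
  · by_cases h' : az.1 = b <;> simp [h', ite_and]
  · simp [h]

lemma sum_condJoint_left (i : Fin n) (x : Fin n → S) (s : S) :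
    ∑ b, condJoint p i x b s = condX p i x s := by
  simp only [condJoint, condX, ← Finset.sum_div]
  congr 1
  simp only [Finset.sum_filter]
  rw [Finset.sum_comm]
  refine Finset.sum_congr rfl fun az _ => ?_
  by_cases h : (∀ j : Fin n, j < i → az.2 j = x j)
  · by_cases h' : az.2 i = s <;> simp [h', ite_and]
  · simp [h]

set_option linter.unusedSectionVars false

lemma histP_nonneg (hp0 : ∀ az, 0 ≤ p az) (i : Fin n) (x : Fin n → S) : 0 ≤ histP p i x :=
  Finset.sum_nonneg fun _ _ => hp0 _

lemma condJoint_nonneg (hp0 : ∀ az, 0 ≤ p az) (i : Fin n) (x : Fin n → S) (b : A) (s : S) :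
    0 ≤ condJoint p i x b s :=
  div_nonneg (Finset.sum_nonneg fun _ _ => hp0 _) (histP_nonneg hp0 i x)

lemma condL1_sq_le (hp0 : ∀ az, 0 ≤ p az) (i : Fin n) (x : Fin n → S) (hx : 0 < histP p i x) :
    condL1 p i x ^ 2 ≤ 2 * condKL p i x := by
  have hJ := condJoint_nonneg hp0 i x
  have hA : ∀ b, 0 ≤ condA p i x b := fun b => by
    rw [← sum_condJoint_right]; exact Finset.sum_nonneg fun _ _ => hJ _ _
  have hX : ∀ s, 0 ≤ condX p i x s := fun s => by
    rw [← sum_condJoint_left]; exact Finset.sum_nonneg fun _ _ => hJ _ _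
  have hJ1 : ∑ b, ∑ s, condJoint p i x b s = 1 := by
    have := sum_condJoint_mul (p := p) i x (fun _ _ => 1)
    simp only [mul_one] at this
    rw [this]
    exact div_self hx.ne'
  have hA1 : ∑ b, condA p i x b = 1 := by simp_rw [← sum_condJoint_right]; exact hJ1
  have hX1 : ∑ s, condX p i x s = 1 := by
    simp_rw [← sum_condJoint_left]; rw [Finset.sum_comm]; exact hJ1
  have := pinsker (ι := A × S) (fun bs => condJoint p i x bs.1 bs.2)
    (fun bs => condA p i x bs.1 * condX p i x bs.2) (fun _ => hJ _ _)
    (fun _ => mul_nonneg (hA _) (hX _)) (by rw [Fintype.sum_prod_type]; exact hJ1)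
    (by rw [Fintype.sum_prod_type]; simp only [← Finset.mul_sum, hX1, mul_one, hA1])
    (by
      rintro ⟨b, s⟩ h
      refine le_antisymm ?_ (hJ b s)
      rcases mul_eq_zero.mp h with h | h
      · rw [← h, ← sum_condJoint_right]
        exact Finset.single_le_sum (f := fun s => condJoint p i x b s)
          (fun _ _ => hJ _ _) (Finset.mem_univ s)
      · rw [← h, ← sum_condJoint_left]
        exact Finset.single_le_sum (f := fun b => condJoint p i x b s)
          (fun _ _ => hJ _ _) (Finset.mem_univ b))
  simpa only [Fintype.sum_prod_type, condL1, condKL, llr] using this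

lemma histP_pos (hp0 : ∀ az, 0 ≤ p az) (i : Fin n) {az : A × (Fin n → S)} (h : 0 < p az) :
    0 < histP p i az.2 :=
  h.trans_le (Finset.single_le_sum (f := p) (fun _ _ => hp0 _) (by simp))

lemma histP_congr {i : Fin n} {x y : Fin n → S} (h : ∀ j : Fin n, j < i → y j = x j) :
    histP p i y = histP p i x := by
  unfold histP
  congr 1
  ext az
  simp only [Finset.mem_filter, Finset.mem_univ, true_and]
  exact forall₂_congr fun j hj => by rw [h j hj]

lemma llr_congr {i : Fin n} {x y : Fin n → S} (h : ∀ j : Fin n, j < i → y j = x j) (b : A) (s : S) :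
    llr p i y b s = llr p i x b s := by
  have e : ∀ az : A × (Fin n → S), (∀ j : Fin n, j < i → az.2 j = y j) ↔
      (∀ j : Fin n, j < i → az.2 j = x j) := fun az => forall₂_congr fun j hj => by rw [h j hj]
  simp only [llr, condJoint, condA, condX, histP_congr h, e]

/-- Tower property: averaging the conditional relative entropy over histories gives the expectation
of the log-likelihood ratio at the sampled point. -/
lemma sum_condKL_eq (hp0 : ∀ az, 0 ≤ p az) (i : Fin n) :
    ∑ az : A × (Fin n → S), p az * condKL p i az.2 =
      ∑ az : A × (Fin n → S), p az * llr p i az.2 az.1 (az.2 i) := by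
  simp only [condKL, sum_condJoint_mul, Finset.sum_filter, Finset.sum_div, Finset.mul_sum]
  rw [Finset.sum_comm]
  refine Finset.sum_congr rfl fun az _ => ?_
  rcases (hp0 az).eq_or_lt with h0 | h0
  · simp [← h0]
  have hpos := histP_pos hp0 i h0
  trans ∑ az' : A × (Fin n → S), (if ∀ j : Fin n, j < i → az'.2 j = az.2 j then p az' else 0) *
      (p az * llr p i az.2 az.1 (az.2 i) / histP p i az.2)
  · refine Finset.sum_congr rfl fun az' _ => ?_
    by_cases h : ∀ j : Fin n, j < i → az'.2 j = az.2 j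
    · rw [if_pos h, if_pos fun j hj => (h j hj).symm, histP_congr h, llr_congr h]
    · rw [if_neg h, if_neg fun h' => h fun j hj => (h' j hj).symm]
      simp
  · rw [← Finset.sum_mul, ← Finset.sum_filter]
    change histP p i az.2 * _ = _
    field_simp

lemma prefixAP_pos (hp0 : ∀ az, 0 ≤ p az) (k : ℕ) {az : A × (Fin n → S)} (h : 0 < p az) :
    0 < prefixAP p k az.2 az.1 :=
  h.trans_le (Finset.single_le_sum (f := p) (fun _ _ => hp0 _) (by simp))

lemma prefixAP_le (hp0 : ∀ az, 0 ≤ p az) (k : ℕ) (x : Fin n → S) (b : A) :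
    prefixAP p k x b ≤ prefixP p k x :=
  Finset.sum_le_sum_of_subset_of_nonneg
    (Finset.monotone_filter_right _ fun _ _ h => h.1) fun _ _ _ => hp0 _

/-- At a sampled point, the log-likelihood ratio is
`log P(a | x_{≤ i}) - log P(a | x_{< i})`. -/
lemma llr_eq_sub (hp0 : ∀ az, 0 ≤ p az) (i : Fin n) {az : A × (Fin n → S)} (h : 0 < p az) :
    llr p i az.2 az.1 (az.2 i) =
      Real.log (prefixAP p (i.val + 1) az.2 az.1 / prefixP p (i.val + 1) az.2)
        - Real.log (prefixAP p i.val az.2 az.1 / prefixP p i.val az.2) := by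
  have hstep : ∀ y : Fin n → S, (∀ j : Fin n, j.val < i.val + 1 → y j = az.2 j) ↔
      ((∀ j : Fin n, j < i → y j = az.2 j) ∧ y i = az.2 i) := by
    intro y
    constructor
    · exact fun H => ⟨fun j hj => H j (Nat.lt_succ_of_lt hj), H i (Nat.lt_succ_self _)⟩
    · rintro ⟨H1, H2⟩ j hj
      rcases (Nat.lt_succ_iff.mp hj).eq_or_lt with e | e
      · rw [Fin.ext e]; exact H2
      · exact H1 j e
  have eH : histP p i az.2 = prefixP p i.val az.2 := rfl
  have eA : condA p i az.2 az.1 = prefixAP p i.val az.2 az.1 / prefixP p i.val az.2 := rfl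
  have eX : condX p i az.2 (az.2 i) = prefixP p (i.val + 1) az.2 / prefixP p i.val az.2 := by
    simp only [condX, eH]
    congr 1
    simp only [prefixP, hstep]
  have eJ : condJoint p i az.2 az.1 (az.2 i) =
      prefixAP p (i.val + 1) az.2 az.1 / prefixP p i.val az.2 := by
    simp only [condJoint, eH]
    congr 1
    simp only [prefixAP, hstep, and_assoc, and_comm]
  have h1 := prefixAP_pos hp0 i.val h
  have h2 := prefixAP_pos hp0 (i.val + 1) h
  have h3 := h1.trans_le (prefixAP_le hp0 _ _ _)
  have h4 := h2.trans_le (prefixAP_le hp0 _ _ _)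
  rw [llr, eJ, eA, eX, ← Real.log_div (by positivity) (by positivity)]
  congr 1
  field_simp

/-- Chain rule: the total conditional mutual information is at most `H(A) ≤ log |A|`. -/
lemma sum_sum_condKL_le [Nonempty A] (hp0 : ∀ az, 0 ≤ p az) (hp1 : ∑ az, p az = 1) :
    ∑ i : Fin n, ∑ az : A × (Fin n → S), p az * condKL p i az.2 ≤
      Real.log (Fintype.card A) := by
  simp_rw [sum_condKL_eq hp0]
  rw [Finset.sum_comm]
  set PA : A → ℝ := fun b => ∑ x : Fin n → S, p (b, x) with hPA
  have hPA0 : ∀ b, 0 ≤ PA b := fun b => Finset.sum_nonneg fun _ _ => hp0 _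
  have hPA1 : ∑ b, PA b = 1 := by rw [← hp1, Fintype.sum_prod_type]
  have e0 : ∀ x : Fin n → S, prefixP p 0 x = 1 := fun x => by simp [prefixP, hp1]
  have eA0 : ∀ (x : Fin n → S) b, prefixAP p 0 x b = PA b := fun x b => by
    simp only [prefixAP, Nat.not_lt_zero, false_imp_iff, implies_true, true_and,
      Finset.sum_filter, Fintype.sum_prod_type, hPA]
    rw [Finset.sum_eq_single b]
    · simp
    · intro c _ hc; simp [hc]
    · simp
  have hterm : ∀ az : A × (Fin n → S),
      ∑ i : Fin n, p az * llr p i az.2 az.1 (az.2 i) ≤ p az * -Real.log (PA az.1) := by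
    intro az
    rcases (hp0 az).eq_or_lt with h0 | h0
    · simp [← h0]
    rw [← Finset.mul_sum]
    refine mul_le_mul_of_nonneg_left ?_ h0.le
    simp_rw [llr_eq_sub hp0 _ h0]
    rw [Fin.sum_univ_eq_sum_range (fun k =>
      Real.log (prefixAP p (k + 1) az.2 az.1 / prefixP p (k + 1) az.2)
        - Real.log (prefixAP p k az.2 az.1 / prefixP p k az.2)) n,
      Finset.sum_range_sub (fun k => Real.log (prefixAP p k az.2 az.1 / prefixP p k az.2)),
      e0, eA0, div_one]
    have h1 := prefixAP_pos hp0 n h0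
    have h2 := prefixAP_le hp0 n az.2 az.1
    have := Real.log_nonpos (div_nonneg h1.le (h1.le.trans h2))
      (div_le_one_of_le₀ h2 (h1.le.trans h2))
    linarith
  refine (Finset.sum_le_sum fun az _ => hterm az).trans ?_
  refine le_trans (le_of_eq ?_) (entropy_le PA hPA0 hPA1)
  rw [Fintype.sum_prod_type]
  simp only [hPA, Finset.sum_mul]

end Cond

/-- Let `n = 2^m ≥ 2` and let `ν` be a distribution on `{1,…,n}` with
`ν(j) ≤ (1/2+ε)^{log₂ n}` for every `j` (as holds when `j` is selected using `log₂ n` bits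
from an `ε`-Santha–Vazirani source).  Then for any distribution `p` on `A × Σⁿ`,
`∑_j ν(j) · E_{(a,x)∼p} ‖ p_{A,X_j|X_{<j}} − p_{A|X_{<j}} ⊗ p_{X_j|X_{<j}} ‖₁
  ≤ √(2·ln 2 · n^{log₂(1+2ε)} · log₂|A| / n)`. -/
theorem sv_weighted_conditional_decoupling
    {A S : Type*} [Fintype A] [Fintype S] [DecidableEq A] [DecidableEq S]
    [Nonempty A] [Nonempty S]
    (ε : ℝ) (hε0 : 0 ≤ ε) (hε : ε < 1/2)
    (m : ℕ) (hm : 1 ≤ m) (n : ℕ) (hn : n = 2 ^ m)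
    (p : A × (Fin n → S) → ℝ) (hp0 : ∀ az, 0 ≤ p az) (hp1 : ∑ az, p az = 1)
    (ν : Fin n → ℝ) (hν0 : ∀ j, 0 ≤ ν j) (hν1 : ∑ j, ν j = 1)
    (hνSV : ∀ j, ν j ≤ (1/2 + ε) ^ (Real.logb 2 (n : ℝ))) :
    ∑ j : Fin n, ν j * ∑ az : A × (Fin n → S), p az * condL1 p j az.2
      ≤ Real.sqrt (2 * Real.log 2 * (n : ℝ) ^ (Real.logb 2 (1 + 2*ε))
          * Real.logb 2 (Fintype.card A) / n) := by
  -- As `n = 2 ^ m`, the uniform bound on `ν` is the natural power `(1/2 + ε) ^ m`.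
  have hnR : (n : ℝ) = 2 ^ m := by rw [hn]; push_cast; rfl
  have hlog2 : 0 < Real.log 2 := Real.log_pos one_lt_two
  have hlogn : Real.logb 2 (n : ℝ) = m := by
    rw [hnR, Real.logb_pow, Real.logb_self_eq_one one_lt_two, mul_one]
  have hM : (n : ℝ) ^ (Real.logb 2 (1 + 2*ε)) / n = (1/2 + ε) ^ m := by
    rw [hnR, ← Real.rpow_natCast 2 m, ← Real.rpow_mul two_pos.le, mul_comm,
      Real.rpow_mul two_pos.le, Real.rpow_logb two_pos (by norm_num) (by linarith),
      Real.rpow_natCast, Real.rpow_natCast, ← div_pow]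
    congr 1
    ring
  have hrhs : 2 * Real.log 2 * (n : ℝ) ^ (Real.logb 2 (1 + 2*ε))
      * Real.logb 2 (Fintype.card A) / n
      = (1/2 + ε) ^ m * (2 * Real.log (Fintype.card A)) := by
    rw [← hM, Real.logb, Real.logb]
    field_simp
  simp only [hlogn, Real.rpow_natCast] at hνSV
  rw [hrhs]
  apply Real.le_sqrt_of_sq_le
  have hM0 : 0 ≤ (1/2 + ε) ^ m := by positivity
  -- Cauchy–Schwarz for the probability weights `ν j * p az`.
  have hcs : (∑ j : Fin n, ν j * ∑ az : A × (Fin n → S), p az * condL1 p j az.2) ^ 2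
      ≤ ∑ j : Fin n, ν j * ∑ az : A × (Fin n → S), p az * condL1 p j az.2 ^ 2 := by
    have h := Finset.sum_sq_le_sum_mul_sum_of_sq_le_mul
      (Finset.univ : Finset (Fin n × (A × (Fin n → S))))
      (r := fun t => ν t.1 * (p t.2 * condL1 p t.1 t.2.2))
      (f := fun t => ν t.1 * p t.2)
      (g := fun t => ν t.1 * (p t.2 * condL1 p t.1 t.2.2 ^ 2))
      (fun t _ => mul_nonneg (hν0 _) (hp0 _))
      (fun t _ => mul_nonneg (hν0 _) (mul_nonneg (hp0 _) (sq_nonneg _)))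
      (fun t _ => le_of_eq (by ring))
    rw [Fintype.sum_prod_type, Fintype.sum_prod_type (f := fun t => ν t.1 * p t.2),
      Fintype.sum_prod_type] at h
    simpa only [← Finset.mul_sum, hp1, mul_one, hν1, one_mul] using h
  have hpin : ∀ (j : Fin n) (az : A × (Fin n → S)),
      p az * condL1 p j az.2 ^ 2 ≤ 2 * (p az * condKL p j az.2) := by
    intro j az
    rcases (hp0 az).eq_or_lt with h0 | h0
    · simp [← h0]
    · have := mul_le_mul_of_nonneg_left (condL1_sq_le hp0 j az.2 (histP_pos hp0 j h0)) h0.le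
      linarith
  calc _ ≤ ∑ j : Fin n, ν j * ∑ az : A × (Fin n → S), p az * condL1 p j az.2 ^ 2 := hcs
    _ ≤ ∑ j : Fin n, (1/2 + ε) ^ m * ∑ az : A × (Fin n → S), 2 * (p az * condKL p j az.2) := by
      refine Finset.sum_le_sum fun j _ => mul_le_mul (hνSV j)
        (Finset.sum_le_sum fun az _ => hpin j az)
        (Finset.sum_nonneg fun az _ => mul_nonneg (hp0 _) (sq_nonneg _)) hM0
    _ = (1/2 + ε) ^ m *
        (2 * ∑ j : Fin n, ∑ az : A × (Fin n → S), p az * condKL p j az.2) := by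
      simp only [Finset.mul_sum]
    _ ≤ _ := by
      have := sum_sum_condKL_le hp0 hp1
      gcongr
end

section
/- Let ε ∈ [0,1/2), 0 ≤ μ < 1, δ ≥ 0, δ̃ ≥ 0, and k ≥ 1, and set f(ε) := (1/2+ε)⁴ + (1/2−ε)⁴ + 4·(1/2−ε)³·(1/2+ε) + 2·(1/2−ε)²·(1/2+ε)². Consider a finite probability space describing k sequential rounds, where in round l a 4-bit input u_l ∈ U₀ ∪ U₁ and a 4-bit output x_l ∈ {0,1}⁴ are generated. For each l and each history h of positive probability, write ν(u|h) = Pr[u_l = u | h] and P_h(x|u) = Pr[x_l = x | u_l = u, h], and set δ_l(h) = ∑_{u∈U₀∪U₁} ∑_x B(x,u) P_h(x|u). Assume ν(u|h) ≤ (1/2+ε)⁴ / f(ε) for every u ∈ U₀ ∪ U₁ and every history h, and assume δ_l(h) ≤ δ̃ for every l and every history h (the (1, δ̃)-good condition). Let Z_k := (1/k) ∑_{l=1}^{k} B(x_l, u_l). If δ̃ ≤ (1−μ)·δ·(1/2−ε)⁴·f(ε) / (4·(1/2+ε)⁴), then Pr[ Z_k ≤ (1/2−ε)⁴·(1−μ)·δ/2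 ] ≥ 1 − exp( −k·(1/2−ε)⁸·(1−μ)²·δ² / 2048 ). -/
/-!
Write `c = (1/2-ε)⁴(1-μ)δ`. Given the history, the expected Bell coefficient of a round is
`∑ᵤ ν(u|h) ∑ₓ B(x,u) P_h(x|u) ≤ (max ν) · δ̃ ≤ c/4` (`sum_bell_agree_le`). Since `B ∈ {0,1}`,
`exp B = 1 + (e-1)B`, so each round multiplies the exponential moment of the partial sum of the
Bell coefficients by at most `1 + (e-1)c/4` (`moment_le`). Markov's inequality applied to
`exp (∑ₗ Bₗ)` at the level `exp (kc/2)` bounds the rejection probability by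
`exp (k((e-1)/4 - 1/2)c)`. As `e < 2.72`, this is at most `exp (-kc²/2048)` when `c ≤ 2`, and for
`c ≥ 2` rejection is impossible because `Z_k ≤ 1`.
-/

open Finset

section Rounds

variable (k : ℕ)

/-- Outcome space of `k` sequential rounds: in round `l` an input `u_l ∈ {0,1}⁴` and an
output `x_l ∈ {0,1}⁴` are produced; `(ω l).1` is the input and `(ω l).2` the output. -/
abbrev Rounds := Fin k → ((Fin 4 → Bool) × (Fin 4 → Bool))

variable (ρ : Rounds k → ℝ)

/-- Probability of the history of `ω` before round `l`. -/
def histProb (l : Fin k) (ω : Rounds k) : ℝ :=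
  ∑ ω' ∈ univ.filter (fun ω' : Rounds k => ∀ l' : Fin k, l' < l → ω' l' = ω l'), ρ ω'

/-- `ν(u|h)`: conditional probability that the round-`l` input is `u`, given the history of
`ω` before round `l`. -/
noncomputable def nuCond (l : Fin k) (ω : Rounds k) (u : Fin 4 → Bool) : ℝ :=
  (∑ ω' ∈ univ.filter
      (fun ω' : Rounds k => (∀ l' : Fin k, l' < l → ω' l' = ω l') ∧ (ω' l).1 = u), ρ ω') /
    histProb k ρ l ω

/-- `P_h(x|u)`: conditional probability that the round-`l` output is `x`, given that the
round-`l` input is `u` and given the history of `ω` before round `l`. -/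
noncomputable def pCond (l : Fin k) (ω : Rounds k) (u x : Fin 4 → Bool) : ℝ :=
  (∑ ω' ∈ univ.filter
      (fun ω' : Rounds k => (∀ l' : Fin k, l' < l → ω' l' = ω l') ∧ (ω' l) = (u, x)), ρ ω') /
    (∑ ω' ∈ univ.filter
      (fun ω' : Rounds k => (∀ l' : Fin k, l' < l → ω' l' = ω l') ∧ (ω' l).1 = u), ρ ω')

/-- `δ_l(h) = ∑_{u ∈ U₀∪U₁} ∑_x B(x,u) P_h(x|u)` for the history `h` of `ω` before round `l`. -/
noncomputable def deltaRound (l : Fin k) (ω : Rounds k) : ℝ :=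
  ∑ u ∈ U0 ∪ U1, ∑ x : Fin 4 → Bool, BellCoeff x u * pCond k ρ l ω u x

/-- The empirical Bell average `Z_k := (1/k) ∑_l B(x_l, u_l)`. -/
noncomputable def empiricalBell (ω : Rounds k) : ℝ :=
  (1 / (k : ℝ)) * ∑ l : Fin k, BellCoeff ((ω l).2) ((ω l).1)

end Rounds

lemma bellCoeff_eq (x u : Fin 4 → Bool) : BellCoeff x u = 0 ∨ BellCoeff x u = 1 := by
  unfold BellCoeff
  split_ifs <;> simp

lemma bellCoeff_nonneg (x u : Fin 4 → Bool) : 0 ≤ BellCoeff x u := by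
  rcases bellCoeff_eq x u with h | h <;> simp [h]

lemma bellCoeff_le_one (x u : Fin 4 → Bool) : BellCoeff x u ≤ 1 := by
  rcases bellCoeff_eq x u with h | h <;> simp [h]

lemma bellCoeff_eq_zero {x u : Fin 4 → Bool} (hu : u ∉ U0 ∪ U1) : BellCoeff x u = 0 := by
  unfold BellCoeff
  rw [if_neg]
  simp only [Finset.mem_union] at hu
  tauto

/-- `BellCoeff` takes only the values `0` and `1`, so its exponential is affine in it. -/
lemma exp_bellCoeff (x u : Fin 4 → Bool) :
    Real.exp (BellCoeff x u) = 1 + (Real.exp 1 - 1) * BellCoeff x u := by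
  rcases bellCoeff_eq x u with h | h <;> simp [h]

/-- The conditional expectation of the round-`l` Bell coefficient is at most `v * d`, when `v`
bounds the input probabilities and `d` the Bell value of the conditional box; both sides are
multiplied by the probability of the history. -/
lemma sum_bell_agree_le {k : ℕ} {ρ : Rounds k → ℝ} (hρ0 : ∀ ω, 0 ≤ ρ ω) (l : Fin k)
    (ω : Rounds k) {v d : ℝ} (hv : 0 ≤ v)
    (hν : 0 < histProb k ρ l ω → ∀ u ∈ U0 ∪ U1, nuCond k ρ l ω u ≤ v)
    (hgood : 0 < histProb k ρ l ω → deltaRound k ρ l ω ≤ d) :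
    ∑ ω' ∈ univ.filter (fun ω' : Rounds k => ∀ l' : Fin k, l' < l → ω' l' = ω l'),
      ρ ω' * BellCoeff (ω' l).2 (ω' l).1 ≤ v * d * histProb k ρ l ω := by
  have hH0 : 0 ≤ histProb k ρ l ω := Finset.sum_nonneg fun _ _ => hρ0 _
  rcases hH0.eq_or_lt with hH | hH
  · rw [← hH, mul_zero]
    have hz := (Finset.sum_eq_zero_iff_of_nonneg (fun ω' _ => hρ0 ω')).1 hH.symm
    exact (Finset.sum_eq_zero fun ω' h' => by rw [hz ω' h', zero_mul]).le
  specialize hν hH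
  specialize hgood hH
  set N : (Fin 4 → Bool) → ℝ := fun u => ∑ ω' ∈ univ.filter
      (fun ω' : Rounds k => (∀ l' : Fin k, l' < l → ω' l' = ω l') ∧ (ω' l).1 = u), ρ ω' with hN
  set M : (Fin 4 → Bool) → (Fin 4 → Bool) → ℝ := fun u x => ∑ ω' ∈ univ.filter
      (fun ω' : Rounds k => (∀ l' : Fin k, l' < l → ω' l' = ω l') ∧ (ω' l) = (u, x)), ρ ω'
    with hM
  have hN0 : ∀ u, 0 ≤ N u := fun u => Finset.sum_nonneg fun _ _ => hρ0 _
  have hM0 : ∀ u x, 0 ≤ M u x := fun u x => Finset.sum_nonneg fun _ _ => hρ0 _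
  have hMN : ∀ u x, M u x ≤ N u := fun u x => by
    refine Finset.sum_le_sum_of_subset_of_nonneg ?_ fun _ _ _ => hρ0 _
    intro ω' h'
    simp only [Finset.mem_filter, Finset.mem_univ, true_and] at h' ⊢
    exact ⟨h'.1, by rw [h'.2]⟩
  have hp : ∀ u x, pCond k ρ l ω u x = M u x / N u := fun _ _ => rfl
  have hp0 : ∀ u x, 0 ≤ pCond k ρ l ω u x := fun u x => by
    rw [hp]; exact div_nonneg (hM0 u x) (hN0 u)
  have hMp : ∀ u x, M u x = N u * pCond k ρ l ω u x := fun u x => by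
    rw [hp]
    rcases (hN0 u).eq_or_lt with h | h
    · have := hMN u x
      have := hM0 u x
      rw [← h, zero_mul]; linarith
    · field_simp
  have hNv : ∀ u ∈ U0 ∪ U1, N u ≤ v * histProb k ρ l ω := fun u hu => by
    have := hν u hu
    rwa [nuCond, div_le_iff₀ hH] at this
  calc ∑ ω' ∈ univ.filter (fun ω' : Rounds k => ∀ l' : Fin k, l' < l → ω' l' = ω l'),
        ρ ω' * BellCoeff (ω' l).2 (ω' l).1
      = ∑ p : (Fin 4 → Bool) × (Fin 4 → Bool), BellCoeff p.2 p.1 * M p.1 p.2 := by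
        rw [← Finset.sum_fiberwise _ (fun ω' : Rounds k => ω' l)]
        refine Finset.sum_congr rfl fun p _ => ?_
        rw [Finset.filter_filter, hM, Finset.mul_sum]
        refine Finset.sum_congr rfl fun ω' h' => ?_
        rw [(Finset.mem_filter.1 h').2.2, mul_comm]
    _ = ∑ u, ∑ x, BellCoeff x u * M u x := Fintype.sum_prod_type _
    _ = ∑ u ∈ U0 ∪ U1, ∑ x, BellCoeff x u * M u x := by
        refine (Finset.sum_subset (Finset.subset_univ _) fun u _ hu => ?_).symm
        exact Finset.sum_eq_zero fun x _ => by rw [bellCoeff_eq_zero hu, zero_mul]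
    _ ≤ ∑ u ∈ U0 ∪ U1, ∑ x,
          v * histProb k ρ l ω * (BellCoeff x u * pCond k ρ l ω u x) := by
        refine Finset.sum_le_sum fun u hu => Finset.sum_le_sum fun x _ => ?_
        rw [hMp, mul_left_comm]
        exact mul_le_mul_of_nonneg_right (hNv u hu)
          (mul_nonneg (bellCoeff_nonneg x u) (hp0 u x))
    _ = v * histProb k ρ l ω * deltaRound k ρ l ω := by
        simp only [deltaRound, Finset.mul_sum]
    _ ≤ v * histProb k ρ l ω * d :=
        mul_le_mul_of_nonneg_left hgood (mul_nonneg hv hH0)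
    _ = v * d * histProb k ρ l ω := by ring

/-- Summing the conditional bound over all histories, weighted by a nonnegative function `F` of
the history. -/
lemma sum_weighted_bell_le {k : ℕ} {ρ : Rounds k → ℝ} (l : Fin k) {q : ℝ}
    (hq : ∀ ω, ∑ ω' ∈ univ.filter (fun ω' : Rounds k => ∀ l' : Fin k, l' < l → ω' l' = ω l'),
      ρ ω' * BellCoeff (ω' l).2 (ω' l).1 ≤ q * histProb k ρ l ω)
    (F : Rounds k → ℝ) (hF0 : ∀ ω, 0 ≤ F ω)
    (hF : ∀ ω ω' : Rounds k, (∀ l' : Fin k, l' < l → ω' l' = ω l') → F ω' = F ω) :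
    ∑ ω, ρ ω * F ω * BellCoeff (ω l).2 (ω l).1 ≤ q * ∑ ω, ρ ω * F ω := by
  -- Overwriting all rounds from `l` on gives a map whose fibres are the histories.
  set g : Rounds k → Rounds k := fun ω l' => if l' < l then ω l' else default with hg
  have hgiff : ∀ ω ω', g ω' = g ω ↔ ∀ l' : Fin k, l' < l → ω' l' = ω l' := by
    intro ω ω'
    constructor
    · intro h l' hl'
      have := congrFun h l'
      simpa [hg, hl'] using this
    · intro h
      funext l'
      by_cases hl' : l' < l
      · simp [hg, hl', h l' hl']
      · simp [hg, hl']
  rw [← Finset.sum_fiberwise univ g, ← Finset.sum_fiberwise univ g (fun ω => ρ ω * F ω),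
    Finset.mul_sum]
  refine Finset.sum_le_sum fun h _ => ?_
  by_cases hex : ∃ ω, g ω = h
  · obtain ⟨ω, rfl⟩ := hex
    simp only [hgiff]
    have h1 : ∑ ω' ∈ univ.filter (fun ω' : Rounds k => ∀ l' : Fin k, l' < l → ω' l' = ω l'),
        ρ ω' * F ω' * BellCoeff (ω' l).2 (ω' l).1 = F ω *
        ∑ ω' ∈ univ.filter (fun ω' : Rounds k => ∀ l' : Fin k, l' < l → ω' l' = ω l'),
          ρ ω' * BellCoeff (ω' l).2 (ω' l).1 := by
      rw [Finset.mul_sum]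
      refine Finset.sum_congr rfl fun ω' h' => ?_
      rw [hF ω ω' (Finset.mem_filter.1 h').2]; ring
    have h2 : ∑ ω' ∈ univ.filter (fun ω' : Rounds k => ∀ l' : Fin k, l' < l → ω' l' = ω l'),
        ρ ω' * F ω' = F ω * histProb k ρ l ω := by
      rw [histProb, Finset.mul_sum]
      refine Finset.sum_congr rfl fun ω' h' => ?_
      rw [hF ω ω' (Finset.mem_filter.1 h').2]; ring
    rw [h1, h2, mul_left_comm]
    exact mul_le_mul_of_nonneg_left (hq ω) (hF0 ω)
  · have he : univ.filter (fun ω => g ω = h) = ∅ :=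
      Finset.filter_eq_empty_iff.2 fun ω _ hω => hex ⟨ω, hω⟩
    simp [he]

/-- Exponential moment of the sum of the Bell coefficients of the first `j` rounds. -/
lemma moment_le {k : ℕ} {ρ : Rounds k → ℝ} (hρ1 : ∑ ω, ρ ω = 1) {q : ℝ} (hq0 : 0 ≤ q)
    (hq : ∀ (l : Fin k) (ω), ∑ ω' ∈ univ.filter
      (fun ω' : Rounds k => ∀ l' : Fin k, l' < l → ω' l' = ω l'),
      ρ ω' * BellCoeff (ω' l).2 (ω' l).1 ≤ q * histProb k ρ l ω) (j : ℕ) (hj : j ≤ k) :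
    ∑ ω, ρ ω * Real.exp (∑ l ∈ univ.filter (fun l : Fin k => l.val < j),
      BellCoeff (ω l).2 (ω l).1) ≤ (1 + (Real.exp 1 - 1) * q) ^ j := by
  have he : (0 : ℝ) ≤ Real.exp 1 - 1 := by
    have := Real.add_one_le_exp (1 : ℝ); linarith
  induction j with
  | zero => simp [hρ1]
  | succ j ih =>
    specialize ih (by omega)
    set l : Fin k := ⟨j, by omega⟩ with hl
    set F : Rounds k → ℝ := fun ω => Real.exp (∑ l ∈ univ.filter (fun l : Fin k => l.val < j),
      BellCoeff (ω l).2 (ω l).1) with hFdef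
    have hset : univ.filter (fun l : Fin k => l.val < j + 1) =
        insert l (univ.filter (fun l : Fin k => l.val < j)) := by
      ext m
      simp only [Finset.mem_filter, Finset.mem_univ, true_and, Finset.mem_insert, hl, Fin.ext_iff]
      omega
    have hstep : ∀ ω : Rounds k, ρ ω * Real.exp (∑ l ∈ univ.filter
        (fun l : Fin k => l.val < j + 1), BellCoeff (ω l).2 (ω l).1) =
        ρ ω * F ω + (Real.exp 1 - 1) * (ρ ω * F ω * BellCoeff (ω l).2 (ω l).1) := by
      intro ω
      rw [hset, Finset.sum_insert (by simp [hl]), Real.exp_add, exp_bellCoeff]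
      ring
    have hF : ∀ ω ω' : Rounds k, (∀ l' : Fin k, l' < l → ω' l' = ω l') → F ω' = F ω := by
      intro ω ω' h
      simp only [hFdef]
      congr 1
      refine Finset.sum_congr rfl fun m hm => ?_
      rw [h m (Fin.lt_def.2 (Finset.mem_filter.1 hm).2)]
    have hw := sum_weighted_bell_le l (hq l) F (fun _ => (Real.exp_pos _).le) hF
    rw [Finset.sum_congr rfl fun ω _ => hstep ω, Finset.sum_add_distrib, ← Finset.mul_sum]
    calc _ ≤ ∑ ω, ρ ω * F ω + (Real.exp 1 - 1) * (q * ∑ ω, ρ ω * F ω) := by gcongr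
      _ = (1 + (Real.exp 1 - 1) * q) * ∑ ω, ρ ω * F ω := by ring
      _ ≤ (1 + (Real.exp 1 - 1) * q) * (1 + (Real.exp 1 - 1) * q) ^ j :=
        mul_le_mul_of_nonneg_left ih (by positivity)
      _ = _ := by ring

/-- If each round has conditional Bell expectation at most `c / 4`, the empirical average exceeds
`c / 2` with probability at most `exp (-k c² / 2048)`. -/
lemma tail_bound {k : ℕ} (hk : 1 ≤ k) {ρ : Rounds k → ℝ} (hρ0 : ∀ ω, 0 ≤ ρ ω)
    (hρ1 : ∑ ω, ρ ω = 1) {c : ℝ} (hc0 : 0 ≤ c)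
    (hq : ∀ (l : Fin k) (ω), ∑ ω' ∈ univ.filter
      (fun ω' : Rounds k => ∀ l' : Fin k, l' < l → ω' l' = ω l'),
      ρ ω' * BellCoeff (ω' l).2 (ω' l).1 ≤ c / 4 * histProb k ρ l ω) :
    ∑ ω ∈ univ.filter (fun ω : Rounds k => ¬ empiricalBell k ω ≤ c / 2), ρ ω
      ≤ Real.exp (-(k : ℝ) * c ^ 2 / 2048) := by
  have hk0 : (0 : ℝ) < k := by exact_mod_cast hk
  rcases le_total 2 c with hc | hc
  · have hemp : univ.filter (fun ω : Rounds k => ¬ empiricalBell k ω ≤ c / 2) = ∅ := by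
      refine Finset.filter_eq_empty_iff.2 fun ω _ => not_not.2 ?_
      have h1 : ∑ l : Fin k, BellCoeff (ω l).2 (ω l).1 ≤ k := by
        refine (Finset.sum_le_sum fun l _ => bellCoeff_le_one (ω l).2 (ω l).1).trans ?_
        simp
      have h2 : empiricalBell k ω ≤ 1 := by
        rw [empiricalBell, one_div, inv_mul_le_iff₀ hk0]; linarith
      linarith
    rw [hemp, Finset.sum_empty]
    exact (Real.exp_pos _).le
  have hm := moment_le hρ1 (by linarith : 0 ≤ c / 4) hq k le_rfl
  simp only [Fin.is_lt, Finset.filter_true] at hm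
  have hmarkov : Real.exp (k * (c / 2)) *
      ∑ ω ∈ univ.filter (fun ω : Rounds k => ¬ empiricalBell k ω ≤ c / 2), ρ ω ≤
      ∑ ω, ρ ω * Real.exp (∑ l, BellCoeff (ω l).2 (ω l).1) := by
    rw [Finset.mul_sum]
    calc _ ≤ ∑ ω ∈ univ.filter (fun ω : Rounds k => ¬ empiricalBell k ω ≤ c / 2),
            ρ ω * Real.exp (∑ l, BellCoeff (ω l).2 (ω l).1) := by
          refine Finset.sum_le_sum fun ω hω => ?_
          rw [mul_comm]
          refine mul_le_mul_of_nonneg_left (Real.exp_le_exp.2 ?_) (hρ0 ω)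
          have h := (Finset.mem_filter.1 hω).2
          rw [empiricalBell, one_div, inv_mul_le_iff₀ hk0] at h
          exact (not_le.1 h).le
      _ ≤ _ := Finset.sum_le_sum_of_subset_of_nonneg (Finset.filter_subset _ _)
          fun ω _ _ => mul_nonneg (hρ0 ω) (Real.exp_pos _).le
  have he := Real.exp_one_lt_d9
  have he1 := Real.add_one_le_exp (1 : ℝ)
  have hpow : (1 + (Real.exp 1 - 1) * (c / 4)) ^ k ≤
      Real.exp (k * ((Real.exp 1 - 1) * (c / 4))) := by
    rw [Real.exp_nat_mul]
    have h0 : 0 ≤ (Real.exp 1 - 1) * (c / 4) := mul_nonneg (by linarith) (by linarith)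
    refine pow_le_pow_left₀ (by linarith) ?_ k
    have := Real.add_one_le_exp ((Real.exp 1 - 1) * (c / 4))
    linarith
  have hexp : Real.exp (k * ((Real.exp 1 - 1) * (c / 4))) ≤
      Real.exp (k * (c / 2)) * Real.exp (-(k : ℝ) * c ^ 2 / 2048) := by
    rw [← Real.exp_add]
    refine Real.exp_le_exp.2 ?_
    have h1 : (Real.exp 1 - 1) * (c / 4) ≤ c / 2 - c ^ 2 / 2048 := by
      nlinarith [mul_nonneg hc0 (sub_nonneg.2 he.le), mul_nonneg hc0 (sub_nonneg.2 hc)]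
    have := mul_le_mul_of_nonneg_left h1 hk0.le
    linarith
  exact le_of_mul_le_mul_left (hmarkov.trans (hm.trans (hpow.trans hexp))) (Real.exp_pos _)

/-- **robustness.** Set
`f(ε) = (1/2+ε)⁴ + (1/2−ε)⁴ + 4(1/2−ε)³(1/2+ε) + 2(1/2−ε)²(1/2+ε)²`.  In `k` sequential
rounds whose inputs always lie in `U₀ ∪ U₁`, if every input value `u ∈ U₀ ∪ U₁` has
conditional probability at most `(1/2+ε)⁴/f(ε)` given any positive-probability history, and
every conditional box is `(1, δ̃)`-good (`δ_l(h) ≤ δ̃`), then whenever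
`δ̃ ≤ (1−μ)δ(1/2−ε)⁴f(ε)/(4(1/2+ε)⁴)` the test `Z_k ≤ (1/2−ε)⁴(1−μ)δ/2` passes with
probability at least `1 − exp(−k(1/2−ε)⁸(1−μ)²δ²/2048)`. -/
theorem robustness_test_accepts
    (ε : ℝ) (hε0 : 0 ≤ ε) (hε : ε < 1/2)
    (μ : ℝ) (hμ0 : 0 ≤ μ) (hμ1 : μ < 1)
    (δ : ℝ) (hδ : 0 ≤ δ) (δt : ℝ) (hδt0 : 0 ≤ δt)
    (k : ℕ) (hk : 1 ≤ k)
    (ρ : Rounds k → ℝ) (hρ0 : ∀ ω, 0 ≤ ρ ω) (hρ1 : ∑ ω, ρ ω = 1)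
    (hsupp : ∀ ω : Rounds k, ρ ω ≠ 0 → ∀ l : Fin k, (ω l).1 ∈ U0 ∪ U1)
    (hν : ∀ (l : Fin k) (ω : Rounds k), 0 < histProb k ρ l ω →
      ∀ u ∈ U0 ∪ U1, nuCond k ρ l ω u ≤
        (1/2 + ε)^4 /
          ((1/2 + ε)^4 + (1/2 - ε)^4 + 4 * (1/2 - ε)^3 * (1/2 + ε)
            + 2 * (1/2 - ε)^2 * (1/2 + ε)^2))
    (hgood : ∀ (l : Fin k) (ω : Rounds k), 0 < histProb k ρ l ω →
      deltaRound k ρ l ω ≤ δt)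
    (hδt : δt ≤ (1 - μ) * δ * (1/2 - ε)^4 *
        ((1/2 + ε)^4 + (1/2 - ε)^4 + 4 * (1/2 - ε)^3 * (1/2 + ε)
          + 2 * (1/2 - ε)^2 * (1/2 + ε)^2) / (4 * (1/2 + ε)^4)) :
    1 - Real.exp (-(k : ℝ) * (1/2 - ε)^8 * (1 - μ)^2 * δ^2 / 2048)
      ≤ ∑ ω ∈ univ.filter (fun ω : Rounds k =>
          empiricalBell k ω ≤ (1/2 - ε)^4 * (1 - μ) * δ / 2), ρ ω := by
  have ha : 0 < (1/2 - ε) := by linarith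
  have hb : 0 < (1/2 + ε) := by linarith
  set f : ℝ := (1/2 + ε)^4 + (1/2 - ε)^4 + 4 * (1/2 - ε)^3 * (1/2 + ε)
    + 2 * (1/2 - ε)^2 * (1/2 + ε)^2 with hf
  have hf0 : 0 < f := by positivity
  set c : ℝ := (1/2 - ε)^4 * (1 - μ) * δ with hc
  have hc0 : 0 ≤ c := mul_nonneg (mul_nonneg (by positivity) (by linarith)) hδ
  have hv : 0 ≤ (1/2 + ε)^4 / f := by positivity
  have hvd : (1/2 + ε)^4 / f * δt ≤ c / 4 := by
    refine (mul_le_mul_of_nonneg_left hδt hv).trans (le_of_eq ?_)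
    rw [hc]
    field_simp
  have htail := tail_bound hk hρ0 hρ1 hc0 fun l ω =>
    (sum_bell_agree_le hρ0 l ω hv (hν l ω) (hgood l ω)).trans
      (mul_le_mul_of_nonneg_right hvd (Finset.sum_nonneg fun _ _ => hρ0 _))
  have hsplit := Finset.sum_filter_add_sum_filter_not univ
    (fun ω : Rounds k => empiricalBell k ω ≤ c / 2) ρ
  have hexp : -(k : ℝ) * (1/2 - ε)^8 * (1 - μ)^2 * δ^2 / 2048 = -(k : ℝ) * c ^ 2 / 2048 := by
    rw [hc]; ring
  rw [hexp]
  linarith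
end
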